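/- arXiv:2208.11010 — 2 statements merged into one kernel-verified Lean document; each statement's English description precedes it below -/
import Mathlib

section
/- Let X be a subset of ℝ^n, let f : ℝ^n → ℝ be differentiable and μ-strongly convex for some μ > 0 (i.e., f(y) ≥ f(x) + ⟨∇f(x), y − x⟩ + (μ/2)‖y − x‖² for all x, y ∈ ℝ^n), let x̂ ∈ ℝ^n, and let g(x̂) := sup_{v ∈ X} ⟨∇f(x̂), x̂ − v⟩ (assumed finite). Let J be a finite set of coordinate indices, let j ∈ J be such that x̂_j is not an integer, and let Ĵ := {k ∈ J : k ≠ j and x̂_k ∉ ℤ}. Then every x* ∈ X satisfying x*_j ≤ ⌊x̂_j⌋ and x*_k ∈ ℤ for all k ∈ J satisfies f(x*) ≥ f(x̂) + (μ/2)·(x̂_j − ⌊x̂_j⌋)² + (μ/2)·Σ_{k ∈ Ĵ} min{(x̂_k − ⌊x̂_k⌋)², (⌈x̂_k⌉ − x̂_k)²} − g(x̂). -/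
open scoped RealInnerProductSpace

/-!
By strong convexity, `f` at a feasible point `x⋆` exceeds `f x̂` by at least
`(μ / 2) ‖x⋆ - x̂‖²`, up to the first-order term, which the Frank–Wolfe gap controls on all of `X`.
The squared distance splits over coordinates, and each coordinate on which `x⋆` is integral, or lies
below the floor of `x̂`, contributes at least the squared distance to the nearest allowed integer.
-/

section Rounding

variable {R : Type*} [CommRing R] [LinearOrder R] [IsStrictOrderedRing R] [FloorRing R]

theorem sq_sub_floor_le_sq_sub {x y : R} (h : y ≤ ⌊x⌋) : (x - ⌊x⌋) ^ 2 ≤ (y - x) ^ 2 := by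
  rw [sub_sq_comm y x]
  exact pow_le_pow_left₀ (sub_nonneg.2 (Int.floor_le x)) (sub_le_sub_left h x) 2

theorem sq_ceil_sub_le_sq_sub {x y : R} (h : ⌈x⌉ ≤ y) : (⌈x⌉ - x) ^ 2 ≤ (y - x) ^ 2 :=
  pow_le_pow_left₀ (sub_nonneg.2 (Int.le_ceil x)) (sub_le_sub_right h x) 2

theorem min_sq_sub_floor_sq_ceil_sub_le_sq_intCast_sub (x : R) (m : ℤ) :
    min ((x - ⌊x⌋) ^ 2) ((⌈x⌉ - x) ^ 2) ≤ (m - x) ^ 2 := by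
  rcases le_total (m : R) x with hmx | hxm
  · exact min_le_of_left_le (sq_sub_floor_le_sq_sub (Int.cast_le.2 (Int.le_floor.2 hmx)))
  · exact min_le_of_right_le (sq_ceil_sub_le_sq_sub (Int.cast_le.2 (Int.ceil_le.2 hxm)))

end Rounding

theorem sum_norm_sq_le_norm_sq_of_L2 {ι : Type*} [Fintype ι] {β : ι → Type*}
    [∀ i, SeminormedAddCommGroup (β i)] (v : PiLp 2 β) (s : Finset ι) :
    ∑ i ∈ s, ‖v i‖ ^ 2 ≤ ‖v‖ ^ 2 := by
  rw [PiLp.norm_sq_eq_of_L2]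
  exact Finset.sum_le_univ_sum_of_nonneg fun _ => sq_nonneg _

theorem sq_sub_floor_add_sum_min_sq_le_norm_sub_sq {ι : Type*} [Fintype ι]
    {x y : EuclideanSpace ℝ ι} {j : ι} {s : Finset ι} (hjs : j ∉ s) (hj : y j ≤ ⌊x j⌋)
    (hs : ∀ k ∈ s, ∃ m : ℤ, y k = m) :
    (x j - ⌊x j⌋) ^ 2 + ∑ k ∈ s, min ((x k - ⌊x k⌋) ^ 2) ((⌈x k⌉ - x k) ^ 2) ≤ ‖y - x‖ ^ 2 := by
  have hmin : ∀ k ∈ s, min ((x k - ⌊x k⌋) ^ 2) ((⌈x k⌉ - x k) ^ 2) ≤ (y k - x k) ^ 2 := by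
    intro k hk
    obtain ⟨m, hm⟩ := hs k hk
    rw [hm]
    exact min_sq_sub_floor_sq_ceil_sub_le_sq_intCast_sub (x k) m
  calc
    _ ≤ (y j - x j) ^ 2 + ∑ k ∈ s, (y k - x k) ^ 2 :=
      add_le_add (sq_sub_floor_le_sq_sub hj) (Finset.sum_le_sum hmin)
    _ = ∑ k ∈ Finset.cons j s hjs, ‖(y - x) k‖ ^ 2 := by
      simp only [Finset.sum_cons, PiLp.sub_apply, Real.norm_eq_abs, sq_abs]
    _ ≤ ‖y - x‖ ^ 2 := sum_norm_sq_le_norm_sq_of_L2 (y - x) _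

theorem add_sub_le_of_add_inner_add_le {E : Type*} [SeminormedAddCommGroup E]
    [InnerProductSpace ℝ E] {s x y : E} {a b c g : ℝ} (h : a + ⟪s, y - x⟫ + c ≤ b)
    (hg : ⟪s, x - y⟫ ≤ g) : a + c - g ≤ b := by
  rw [← neg_sub x y, inner_neg_right] at h
  linarith

/-- A `μ`-strong subgradient `s` of `f` at `x̂` relative to `X` takes the place of `∇f(x̂)`. -/
theorem strong_convexity_node_bound_general {ι : Type*} [Fintype ι]
    {X : Set (EuclideanSpace ℝ ι)} {f : EuclideanSpace ℝ ι → ℝ} {μ : ℝ} (hμ : 0 ≤ μ)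
    {xhat s : EuclideanSpace ℝ ι}
    (hs : ∀ y ∈ X, f xhat + ⟪s, y - xhat⟫ + μ / 2 * ‖y - xhat‖ ^ 2 ≤ f y)
    {g : ℝ} (hg : g ∈ upperBounds ((fun v => ⟪s, xhat - v⟫) '' X))
    {j : ι} {I : Finset ι} (hjI : j ∉ I) {xstar : EuclideanSpace ℝ ι} (hX : xstar ∈ X)
    (hj : xstar j ≤ ⌊xhat j⌋) (hI : ∀ k ∈ I, ∃ m : ℤ, xstar k = m) :
    f xhat + μ / 2 * (xhat j - ⌊xhat j⌋) ^ 2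
        + μ / 2 * ∑ k ∈ I, min ((xhat k - ⌊xhat k⌋) ^ 2) ((⌈xhat k⌉ - xhat k) ^ 2) - g
      ≤ f xstar := by
  have hgap : f xhat + μ / 2 * ‖xstar - xhat‖ ^ 2 - g ≤ f xstar :=
    add_sub_le_of_add_inner_add_le (hs xstar hX) (hg (Set.mem_image_of_mem _ hX))
  refine le_trans ?_ hgap
  rw [add_assoc, ← mul_add]
  gcongr
  exact sq_sub_floor_add_sum_min_sq_le_norm_sub_sq hjI hj hI

/-- Strong-convexity node bound tightening: after branching down on a fractional
variable `j` at a relaxed solution `x̂`, every integer-feasible point of the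
child node has objective value bounded below by the displayed quantity. -/
theorem strong_convexity_node_bound {n : ℕ} (X : Set (EuclideanSpace ℝ (Fin n)))
    (f : EuclideanSpace ℝ (Fin n) → ℝ) (hdiff : Differentiable ℝ f)
    (μ : ℝ) (hμ : 0 < μ)
    (hsc : ∀ x y : EuclideanSpace ℝ (Fin n),
      f x + ⟪gradient f x, y - x⟫ + μ / 2 * ‖y - x‖ ^ 2 ≤ f y)
    (xhat : EuclideanSpace ℝ (Fin n))
    (g : ℝ) (hg : IsLUB ((fun v => ⟪gradient f xhat, xhat - v⟫) '' X) g)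
    (J : Finset (Fin n)) (j : Fin n) (hjJ : j ∈ J)
    (hjfrac : ¬ ∃ m : ℤ, xhat j = (m : ℝ))
    (Jhat : Finset (Fin n))
    (hJhat : ∀ k, k ∈ Jhat ↔ k ∈ J ∧ k ≠ j ∧ ¬ ∃ m : ℤ, xhat k = (m : ℝ)) :
    ∀ xstar ∈ X, xstar j ≤ (⌊xhat j⌋ : ℝ) → (∀ k ∈ J, ∃ m : ℤ, xstar k = (m : ℝ)) →
      f xhat + μ / 2 * (xhat j - (⌊xhat j⌋ : ℝ)) ^ 2
          + μ / 2 * ∑ k ∈ Jhat,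
              min ((xhat k - (⌊xhat k⌋ : ℝ)) ^ 2) (((⌈xhat k⌉ : ℝ) - xhat k) ^ 2)
          - g
        ≤ f xstar := by
  intro xstar hX hj hint
  exact strong_convexity_node_bound_general hμ.le (fun y _ => hsc xhat y) hg.1
    (fun h => ((hJhat j).1 h).2.1 rfl) hX hj fun k hk => hint k ((hJhat k).1 hk).1
end

section
/- Let X ⊆ C ⊆ ℝ^n with X nonempty, let f : ℝ^n → ℝ be convex and differentiable, and suppose f has a unique minimizer x* over X with x* ∈ X and f* := f(x*). Suppose f satisfies a (θ, M)-Hölder error bound on C: there exist θ ∈ (0, 1/2] and M > 0 such that ‖x − x*‖ ≤ M·(f(x) − f*)^θ for all x ∈ C with f(x) ≥ f*. Let x̂ ∈ C, let g(x̂) := sup_{v ∈ X} ⟨∇f(x̂), x̂ − v⟩ (assumed finite), and assume f(x̂) ≥ f*. Then for every y ∈ C with f(y) ≥ f* and ‖y − x̂‖ ≥ M·g(x̂)^θ, one has f(y) ≥ M^{−1/θ}·(‖y − x̂‖ − M·g(x̂)^θ)^{1/θ} + f(x̂) − g(x̂). -/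
open scoped RealInnerProductSpace

/-! The tangent inequality of a convex function at `xhat`, evaluated at the minimizer `z`, gives
`f xhat - f z ≤ ⟪∇f(xhat), xhat - z⟫ ≤ g`. The error bound turns this into
`‖xhat - z‖ ≤ M * g ^ θ`, so a point `y` far from `xhat` is also far from `z`; the error bound at
`y`, read as a growth condition, then makes `f y` large compared with `f z ≥ f xhat - g`. -/

theorem le_sub_of_convexOn_of_hasLineDerivWithinAt {E : Type*} [AddCommGroup E] [Module ℝ E]
    {s : Set E} {f : E → ℝ} {f' : ℝ} {x y : E} (hf : ConvexOn ℝ s f) (hx : x ∈ s) (hy : y ∈ s)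
    (hf' : HasLineDerivWithinAt ℝ f f' s x (y - x)) : f' ≤ f y - f x := by
  have hline (t : ℝ) : AffineMap.lineMap x y t = x + t • (y - x) := by
    rw [AffineMap.lineMap_apply_module', add_comm]
  have hconv : ConvexOn ℝ ((fun t : ℝ => x + t • (y - x)) ⁻¹' s)
      (fun t => f (x + t • (y - x))) := by
    simpa only [Function.comp_def, Set.preimage, hline] using
      hf.comp_affineMap (AffineMap.lineMap x y : ℝ →ᵃ[ℝ] E)
  have hslope := hconv.le_slope_of_hasDerivWithinAt (x := 0) (y := 1)
    (by simpa using hx) (by simpa using hy) one_pos hf'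
  simpa [slope_def_field] using hslope

theorem sub_le_inner_of_convexOn_of_hasGradientWithinAt {E : Type*} [NormedAddCommGroup E]
    [InnerProductSpace ℝ E] [CompleteSpace E] {s : Set E} {f : E → ℝ} {f' x y : E}
    (hf : ConvexOn ℝ s f) (hx : x ∈ s) (hy : y ∈ s) (hf' : HasGradientWithinAt f f' s x) :
    f x - f y ≤ ⟪f', x - y⟫ := by
  have htangent : ⟪f', y - x⟫ ≤ f y - f x := by
    simpa using le_sub_of_convexOn_of_hasLineDerivWithinAt hf hx hy
      (hf'.hasFDerivWithinAt.hasLineDerivWithinAt (y - x))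
  rw [inner_sub_right] at htangent ⊢
  linarith

theorem rpow_neg_mul_rpow_le_iff_le_mul_rpow {a t M θ : ℝ} (ha : 0 ≤ a) (ht : 0 ≤ t) (hM : 0 < M)
    (hθ : 0 < θ) : M ^ (-(1 / θ)) * a ^ (1 / θ) ≤ t ↔ a ≤ M * t ^ θ := by
  rw [one_div, Real.rpow_neg hM.le, inv_mul_eq_div, ← Real.div_rpow ha hM.le,
    Real.rpow_inv_le_iff_of_pos (by positivity) ht hθ, div_le_iff₀' hM]

/-- The `(θ, M)`-Hölder error bound (sharpness) of `f` on `C` around the reference point `z`, which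
is the minimizer `x*` in applications. It is only imposed where `f z ≤ f x`, since `Real.rpow` has
junk values at a negative base. -/
def HolderErrorBoundOn {E : Type*} [SeminormedAddCommGroup E] (f : E → ℝ) (C : Set E) (z : E)
    (θ M : ℝ) : Prop :=
  ∀ x ∈ C, f z ≤ f x → ‖x - z‖ ≤ M * (f x - f z) ^ θ

namespace HolderErrorBoundOn

variable {E : Type*} [SeminormedAddCommGroup E] {f : E → ℝ} {C : Set E} {x y z : E} {θ M g : ℝ}

theorem norm_sub_le_of_sub_le (h : HolderErrorBoundOn f C z θ M) (hθ : 0 ≤ θ) (hM : 0 ≤ M)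
    (hx : x ∈ C) (hzx : f z ≤ f x) (hg : f x - f z ≤ g) : ‖x - z‖ ≤ M * g ^ θ :=
  calc
    ‖x - z‖ ≤ M * (f x - f z) ^ θ := h x hx hzx
    _ ≤ M * g ^ θ :=
      mul_le_mul_of_nonneg_left (Real.rpow_le_rpow (sub_nonneg.2 hzx) hg hθ) hM

theorem rpow_norm_sub_le_sub (h : HolderErrorBoundOn f C z θ M) (hθ : 0 < θ) (hM : 0 < M)
    (hx : x ∈ C) (hzx : f z ≤ f x) : M ^ (-(1 / θ)) * ‖x - z‖ ^ (1 / θ) ≤ f x - f z :=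
  (rpow_neg_mul_rpow_le_iff_le_mul_rpow (norm_nonneg _) (sub_nonneg.2 hzx) hM hθ).2 (h x hx hzx)

theorem rpow_norm_sub_sub_add_sub_le (h : HolderErrorBoundOn f C z θ M) (hθ : 0 < θ) (hM : 0 < M)
    (hx : x ∈ C) (hzx : f z ≤ f x) (hg : f x - f z ≤ g) (hy : y ∈ C) (hzy : f z ≤ f y)
    (hyx : M * g ^ θ ≤ ‖y - x‖) :
    M ^ (-(1 / θ)) * (‖y - x‖ - M * g ^ θ) ^ (1 / θ) + f x - g ≤ f y := by
  have hdist : ‖y - x‖ - M * g ^ θ ≤ ‖y - z‖ := by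
    have htriangle := norm_sub_le_norm_sub_add_norm_sub y z x
    rw [norm_sub_rev z x] at htriangle
    linarith [h.norm_sub_le_of_sub_le hθ.le hM.le hx hzx hg]
  have hgrowth : M ^ (-(1 / θ)) * (‖y - x‖ - M * g ^ θ) ^ (1 / θ) ≤ f y - f z :=
    calc
      M ^ (-(1 / θ)) * (‖y - x‖ - M * g ^ θ) ^ (1 / θ)
          ≤ M ^ (-(1 / θ)) * ‖y - z‖ ^ (1 / θ) := by
        gcongr
      _ ≤ f y - f z := h.rpow_norm_sub_le_sub hθ hM hy hzy
  linarith

end HolderErrorBoundOn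

theorem sharpness_node_bound_general {E : Type*} [NormedAddCommGroup E] [InnerProductSpace ℝ E]
    [CompleteSpace E] {X C s : Set E} {f : E → ℝ} {f' xhat y z : E} {θ M g : ℝ}
    (hconv : ConvexOn ℝ s f) (hXs : X ⊆ s) (hz : z ∈ X) (hθ : 0 < θ) (hM : 0 < M)
    (hsharp : HolderErrorBoundOn f C z θ M) (hxhatC : xhat ∈ C) (hxhats : xhat ∈ s)
    (hf' : HasGradientWithinAt f f' s xhat)
    (hg : g ∈ upperBounds ((fun v => ⟪f', xhat - v⟫) '' X)) (hfxhat : f z ≤ f xhat)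
    (hy : y ∈ C) (hfy : f z ≤ f y) (hdist : M * g ^ θ ≤ ‖y - xhat‖) :
    M ^ (-(1 / θ)) * (‖y - xhat‖ - M * g ^ θ) ^ (1 / θ) + f xhat - g ≤ f y := by
  have hdual : f xhat - f z ≤ g :=
    (sub_le_inner_of_convexOn_of_hasGradientWithinAt hconv hxhats (hXs hz) hf').trans
      (hg (Set.mem_image_of_mem _ hz))
  exact hsharp.rpow_norm_sub_sub_add_sub_le hθ hM hxhatC hfxhat hdual hy hfy hdist

/-- Sharpness-based lower bound on the objective value of a child node. -/
theorem sharpness_node_bound {n : ℕ}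
    (X C : Set (EuclideanSpace ℝ (Fin n))) (hXC : X ⊆ C) (hXne : X.Nonempty)
    (f : EuclideanSpace ℝ (Fin n) → ℝ)
    (hconv : ConvexOn ℝ Set.univ f) (hdiff : Differentiable ℝ f)
    (xstar : EuclideanSpace ℝ (Fin n)) (hxstarX : xstar ∈ X)
    (hmin : ∀ x ∈ X, f xstar ≤ f x)
    (huniq : ∀ y ∈ X, (∀ x ∈ X, f y ≤ f x) → y = xstar)
    (θ M : ℝ) (hθ : θ ∈ Set.Ioc (0 : ℝ) (1 / 2)) (hM : 0 < M)
    (hsharp : ∀ x ∈ C, f xstar ≤ f x → ‖x - xstar‖ ≤ M * (f x - f xstar) ^ θ)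
    (xhat : EuclideanSpace ℝ (Fin n)) (hxhatC : xhat ∈ C)
    (g : ℝ) (hg : IsLUB ((fun v => ⟪gradient f xhat, xhat - v⟫) '' X) g)
    (hfxhat : f xstar ≤ f xhat) :
    ∀ y ∈ C, f xstar ≤ f y → M * g ^ θ ≤ ‖y - xhat‖ →
      M ^ (-(1 / θ)) * (‖y - xhat‖ - M * g ^ θ) ^ (1 / θ) + f xhat - g ≤ f y := by
  intro y hy hfy hdist
  exact sharpness_node_bound_general hconv (Set.subset_univ X) hxstarX hθ.1 hM hsharp hxhatC
    (Set.mem_univ xhat) (hasGradientWithinAt_univ.2 (hdiff xhat).hasGradientAt) hg.1 hfxhat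
    hy hfy hdist
end
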